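/- If a, b ∈ R^m give rise to a regular S-pair and t = lcm(lp(‾a), lp(‾b)), then spair(a,b) ≠ 0 and 𝔰(spair(a,b)) equals the ⪯_t-maximum of (t/lp(‾a))⊗𝔰(a) and (t/lp(‾b))⊗𝔰(b). -/

import Mathlib

namespace SigGB

noncomputable section

/-- Power-products in `n` indeterminates, written additively as exponent vectors
(so the power-product `1` is `0`, and multiplication of power-products is `+`). -/
abbrev PP (n : ℕ) : Type := Fin n →₀ ℕ

/-- Terms: a power-product together with a component index (`t·e_i ↝ (t, i)`). -/
abbrev Term (n m : ℕ) : Type := PP n × Fin m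

/-- Multiplication of a term by a power-product: `t ⊗ (s·e_i) = (t·s)·e_i`. -/
def mulTerm {n m : ℕ} (t : PP n) (u : Term n m) : Term n m := (t + u.1, u.2)

/-- Divisibility of terms: `u ∣ v` iff `v = t ⊗ u` for some power-product `t`. -/
def termDvd {n m : ℕ} (u v : Term n m) : Prop := ∃ t : PP n, v = mulTerm t u

/-- Componentwise lcm of power-products. -/
noncomputable def lcmPP {n : ℕ} (s t : PP n) : PP n := Finsupp.zipWith max (max_self 0) s t

/-- Strict part of a relation. -/
def strict {α : Type*} (r : α → α → Prop) (x y : α) : Prop := r x y ∧ x ≠ y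

/-- `ple` is an admissible order on power-products and `tle` is a compatible
linear order on terms. -/
structure OrdersOK {n m : ℕ} (ple : PP n → PP n → Prop)
    (tle : Term n m → Term n m → Prop) : Prop where
  ple_refl : ∀ t, ple t t
  ple_trans : ∀ s t u, ple s t → ple t u → ple s u
  ple_antisymm : ∀ s t, ple s t → ple t s → s = t
  ple_total : ∀ s t, ple s t ∨ ple t s
  ple_one_le : ∀ t, ple 0 t
  ple_mul : ∀ (t s₁ s₂ : PP n), ple s₁ s₂ → ple (t + s₁) (t + s₂)
  tle_refl : ∀ u, tle u u
  tle_trans : ∀ u v w, tle u v → tle v w → tle u w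
  tle_antisymm : ∀ u v, tle u v → tle v u → u = v
  tle_total : ∀ u v, tle u v ∨ tle v u
  tle_mul : ∀ (t : PP n) (u v : Term n m), tle u v → tle (mulTerm t u) (mulTerm t v)
  tle_compat : ∀ (s t : PP n) (i j : Fin m), ple s t → i ≤ j → tle (s, i) (t, j)

variable {K : Type*} [Field K] {n m : ℕ} [NeZero m]

variable (f : Fin m → MvPolynomial (Fin n) K)
variable (ple : PP n → PP n → Prop)
variable (tle : Term n m → Term n m → Prop)

/-- The module homomorphism `R^m → R` determined by `e_i ↦ f i`, i.e. `a ↦ ‾a`. -/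
def bar (a : Fin m → MvPolynomial (Fin n) K) : MvPolynomial (Fin n) K := ∑ i, a i * f i

/-- Multiplication of a module element by a coefficient `c` and a power-product `t`. -/
noncomputable def monomMul (c : K) (t : PP n) (a : Fin m → MvPolynomial (Fin n) K) :
    Fin m → MvPolynomial (Fin n) K :=
  fun i => MvPolynomial.monomial t c * a i

/-- The coefficient of a term in a module element. -/
def coeffM (a : Fin m → MvPolynomial (Fin n) K) (u : Term n m) : K :=
  MvPolynomial.coeff u.1 (a u.2)

open Classical in
/-- Leading power-product of a polynomial w.r.t. `ple`
(junk value `0`, i.e. the power-product `1`, for the zero polynomial). -/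
noncomputable def lp (p : MvPolynomial (Fin n) K) : PP n :=
  if h : ∃ t, MvPolynomial.coeff t p ≠ 0 ∧ ∀ s, MvPolynomial.coeff s p ≠ 0 → ple s t
  then h.choose else 0

/-- Leading coefficient of a polynomial w.r.t. `ple`. -/
noncomputable def lc (p : MvPolynomial (Fin n) K) : K := MvPolynomial.coeff (lp ple p) p

open Classical in
/-- Signature of a module element: its `tle`-largest term with nonzero coefficient
(junk value for `0`). -/
noncomputable def sig (a : Fin m → MvPolynomial (Fin n) K) : Term n m :=
  if h : ∃ u, coeffM a u ≠ 0 ∧ ∀ v, coeffM a v ≠ 0 → tle v u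
  then h.choose else ((0 : PP n), (0 : Fin m))

/-- Leading coefficient of a module element. -/
noncomputable def lcM (a : Fin m → MvPolynomial (Fin n) K) : K := coeffM a (sig tle a)

/-- One-step s-reduction of `a` to `b` modulo `G`, witnessed by `g ∈ G` and the
power-product `t`. -/
def RedStepWith (G : Set (Fin m → MvPolynomial (Fin n) K))
    (a b g : Fin m → MvPolynomial (Fin n) K) (t : PP n) : Prop :=
  g ∈ G ∧ bar f g ≠ 0 ∧
    MvPolynomial.coeff (t + lp ple (bar f g)) (bar f a) ≠ 0 ∧
    b = a - monomMul (MvPolynomial.coeff (t + lp ple (bar f g)) (bar f a) / lc ple (bar f g)) t g ∧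
    tle (mulTerm t (sig tle g)) (sig tle a)

/-- The step witnessed by `g` and `t` is regular: `t ⊗ 𝔰(g) ≺_t 𝔰(a)`. -/
def RegularWith (a g : Fin m → MvPolynomial (Fin n) K) (t : PP n) : Prop :=
  strict tle (mulTerm t (sig tle g)) (sig tle a)

/-- The step witnessed by `g` and `t` is top: `t·lp(‾g) = lp(‾a)`. -/
def TopWith (a g : Fin m → MvPolynomial (Fin n) K) (t : PP n) : Prop :=
  t + lp ple (bar f g) = lp ple (bar f a)

/-- `a` s-reduces to `b` modulo `G` in one step. -/
def SigRedStep (G : Set (Fin m → MvPolynomial (Fin n) K))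
    (a b : Fin m → MvPolynomial (Fin n) K) : Prop :=
  ∃ g t, RedStepWith f ple tle G a b g t

/-- `a` regular s-reduces to `b` modulo `G` in one step. -/
def RegRedStep (G : Set (Fin m → MvPolynomial (Fin n) K))
    (a b : Fin m → MvPolynomial (Fin n) K) : Prop :=
  ∃ g t, RedStepWith f ple tle G a b g t ∧ RegularWith tle a g t

/-- `a` regular top s-reduces to `b` modulo `G` in one step. -/
def RegTopRedStep (G : Set (Fin m → MvPolynomial (Fin n) K))
    (a b : Fin m → MvPolynomial (Fin n) K) : Prop :=
  ∃ g t, RedStepWith f ple tle G a b g t ∧ RegularWith tle a g t ∧ TopWith f ple a g t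

/-- `a` is regular s-irreducible modulo `G`. -/
def RegIrred (G : Set (Fin m → MvPolynomial (Fin n) K))
    (a : Fin m → MvPolynomial (Fin n) K) : Prop :=
  ∀ b, ¬ RegRedStep f ple tle G a b

/-- `a` is regular top s-irreducible modulo `G`. -/
def RegTopIrred (G : Set (Fin m → MvPolynomial (Fin n) K))
    (a : Fin m → MvPolynomial (Fin n) K) : Prop :=
  ∀ b, ¬ RegTopRedStep f ple tle G a b

/-- `a` s-reduces to zero modulo `G`. -/
def SigRedZero (G : Set (Fin m → MvPolynomial (Fin n) K))
    (a : Fin m → MvPolynomial (Fin n) K) : Prop :=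
  ∃ b, Relation.ReflTransGen (SigRedStep f ple tle G) a b ∧ bar f b = 0

/-- `a` regular s-reduces to zero modulo `G`. -/
def RegRedZero (G : Set (Fin m → MvPolynomial (Fin n) K))
    (a : Fin m → MvPolynomial (Fin n) K) : Prop :=
  ∃ b, Relation.ReflTransGen (RegRedStep f ple tle G) a b ∧ bar f b = 0

/-- `G` is a signature Gröbner basis in the term `u`. -/
def IsSigGBIn (G : Set (Fin m → MvPolynomial (Fin n) K)) (u : Term n m) : Prop :=
  ∀ a : Fin m → MvPolynomial (Fin n) K, a ≠ 0 → sig tle a = u → SigRedZero f ple tle G a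

/-- `G` is a signature Gröbner basis up to the term `u`. -/
def IsSigGBUpto (G : Set (Fin m → MvPolynomial (Fin n) K)) (u : Term n m) : Prop :=
  ∀ v, strict tle v u → IsSigGBIn f ple tle G v

/-- `u` is a syzygy signature. -/
def IsSyzSig (u : Term n m) : Prop :=
  ∃ a : Fin m → MvPolynomial (Fin n) K, a ≠ 0 ∧ sig tle a = u ∧ bar f a = 0

/-- The sig-poly-pair `(𝔰(a), ‾a)` of a module element `a`. -/
noncomputable def sppOf (a : Fin m → MvPolynomial (Fin n) K) :
    Term n m × MvPolynomial (Fin n) K :=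
  (sig tle a, bar f a)

/-- `x` is a sig-poly-pair. -/
def IsSPP (x : Term n m × MvPolynomial (Fin n) K) : Prop :=
  ∃ a : Fin m → MvPolynomial (Fin n) K, a ≠ 0 ∧ sppOf f tle a = x

/-- `ro` is a rewrite order. -/
def IsRewriteOrder
    (ro : Term n m × MvPolynomial (Fin n) K → Term n m × MvPolynomial (Fin n) K → Prop) :
    Prop :=
  (∀ x, IsSPP f tle x → ro x x) ∧
  (∀ x y z, IsSPP f tle x → IsSPP f tle y → IsSPP f tle z → ro x y → ro y z → ro x z) ∧
  (∀ x y, IsSPP f tle x → IsSPP f tle y → (ro x y ∨ ro y x)) ∧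
  (∀ x y, IsSPP f tle x → IsSPP f tle y → ro x y → ro y x → x.1 = y.1) ∧
  (∀ (G : Set (Fin m → MvPolynomial (Fin n) K)) (a b : Fin m → MvPolynomial (Fin n) K),
    IsSigGBUpto f ple tle G (sig tle b) → a ∈ G → b ∈ G → a ≠ 0 → b ≠ 0 →
    termDvd (sig tle a) (sig tle b) → RegTopIrred f ple tle G b →
    ro (sppOf f tle a) (sppOf f tle b))

/-- `a` is a canonical rewriter in the term `u` w.r.t. `G` (for the rewrite order `ro`). -/
def IsCanonRewriter
    (ro : Term n m × MvPolynomial (Fin n) K → Term n m × MvPolynomial (Fin n) K → Prop)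
    (G : Set (Fin m → MvPolynomial (Fin n) K)) (u : Term n m)
    (a : Fin m → MvPolynomial (Fin n) K) : Prop :=
  a ∈ G ∧ a ≠ 0 ∧ termDvd (sig tle a) u ∧
    ∀ g ∈ G, g ≠ 0 → termDvd (sig tle g) u → ro (sppOf f tle g) (sppOf f tle a)

/-- `G` is a rewrite basis in the term `u` (for the rewrite order `ro`). -/
def IsRBIn
    (ro : Term n m × MvPolynomial (Fin n) K → Term n m × MvPolynomial (Fin n) K → Prop)
    (G : Set (Fin m → MvPolynomial (Fin n) K)) (u : Term n m) : Prop :=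
  IsSyzSig f tle u ∨
    ∃ g, IsCanonRewriter f tle ro G u g ∧
      RegTopIrred f ple tle G (monomMul (1 : K) (u.1 - (sig tle g).1) g)

/-- `G` is a rewrite basis up to the term `u` (for the rewrite order `ro`). -/
def IsRBUpto
    (ro : Term n m × MvPolynomial (Fin n) K → Term n m × MvPolynomial (Fin n) K → Prop)
    (G : Set (Fin m → MvPolynomial (Fin n) K)) (u : Term n m) : Prop :=
  ∀ v, strict tle v u → IsRBIn f ple tle ro G v

/-- The S-pair of two module elements. -/
noncomputable def spair (a b : Fin m → MvPolynomial (Fin n) K) :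
    Fin m → MvPolynomial (Fin n) K :=
  monomMul ((1 : K) / lc ple (bar f a))
      (lcmPP (lp ple (bar f a)) (lp ple (bar f b)) - lp ple (bar f a)) a -
    monomMul ((1 : K) / lc ple (bar f b))
      (lcmPP (lp ple (bar f a)) (lp ple (bar f b)) - lp ple (bar f b)) b

/-- `a` and `b` give rise to a regular S-pair. -/
def IsRegularSPair (a b : Fin m → MvPolynomial (Fin n) K) : Prop :=
  bar f a ≠ 0 ∧ bar f b ≠ 0 ∧
    mulTerm (lcmPP (lp ple (bar f a)) (lp ple (bar f b)) - lp ple (bar f a)) (sig tle a) ≠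
      mulTerm (lcmPP (lp ple (bar f a)) (lp ple (bar f b)) - lp ple (bar f b)) (sig tle b)

/-- `B` is a Gröbner basis of the ideal `I` w.r.t. `ple`. -/
def IsGroebnerBasis (B : Set (MvPolynomial (Fin n) K)) (I : Ideal (MvPolynomial (Fin n) K)) :
    Prop :=
  (∀ b ∈ B, b ∈ I) ∧ Ideal.span B = I ∧
    ∀ p ∈ I, p ≠ 0 → ∃ b ∈ B, b ≠ 0 ∧ ∃ t : PP n, lp ple p = t + lp ple b

/-- One step of ordinary polynomial reduction of `p` to `q` modulo `B`. -/
def PolyRedStep (B : Set (MvPolynomial (Fin n) K)) (p q : MvPolynomial (Fin n) K) : Prop :=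
  ∃ r ∈ B, r ≠ 0 ∧ ∃ t : PP n, MvPolynomial.coeff (t + lp ple r) p ≠ 0 ∧
    q = p - MvPolynomial.monomial t (MvPolynomial.coeff (t + lp ple r) p / lc ple r) * r

/-- A nonempty finite set has a largest element for a total transitive relation. -/
theorem exists_greatest_of_finite {α : Type*} {r : α → α → Prop}
    (trans : ∀ x y z, r x y → r y z → r x z) (total : ∀ x y, r x y ∨ r y x)
    {s : Set α} (hs : s.Finite) (hne : s.Nonempty) : ∃ x ∈ s, ∀ y ∈ s, r y x := by
  obtain ⟨s, rfl⟩ := hs.exists_finset_coe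
  clear hs
  simp only [Finset.coe_nonempty, Finset.mem_coe] at hne ⊢
  induction hne using Finset.Nonempty.cons_induction with
  | singleton x => simpa using total x x
  | cons x s _ _ ih =>
    obtain ⟨z, hz, hmax⟩ := ih
    simp only [Finset.mem_cons, exists_eq_or_imp, forall_eq_or_imp]
    rcases total x z with hxz | hzx
    · exact Or.inr ⟨z, hz, hxz, hmax⟩
    · exact Or.inl ⟨by simpa using total x x, fun y hy => trans _ _ _ (hmax y hy) hzx⟩

/-- `u` is the `tle`-largest term occurring in `a`. -/
def IsLeadingTerm (a : Fin m → MvPolynomial (Fin n) K) (u : Term n m) : Prop :=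
  coeffM a u ≠ 0 ∧ ∀ v, coeffM a v ≠ 0 → tle v u

variable {f ple tle}

theorem OrdersOK.lc_ne_zero {m : ℕ} {tle : Term n m → Term n m → Prop}
    (hord : OrdersOK ple tle) {p : MvPolynomial (Fin n) K}
    (hp : p ≠ 0) : lc ple p ≠ 0 := by
  have h : ∃ t, MvPolynomial.coeff t p ≠ 0 ∧ ∀ s, MvPolynomial.coeff s p ≠ 0 → ple s t := by
    have hfin : {t | MvPolynomial.coeff t p ≠ 0}.Finite :=
      p.support.finite_toSet.subset fun t ht => MvPolynomial.mem_support_iff.2 ht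
    exact exists_greatest_of_finite hord.ple_trans hord.ple_total hfin
      (MvPolynomial.ne_zero_iff.1 hp)
  rw [lc, lp, dif_pos h]
  exact h.choose_spec.1

theorem OrdersOK.isLeadingTerm_sig (hord : OrdersOK ple tle)
    {a : Fin m → MvPolynomial (Fin n) K} (ha : a ≠ 0) : IsLeadingTerm tle a (sig tle a) := by
  have h : ∃ u, coeffM a u ≠ 0 ∧ ∀ v, coeffM a v ≠ 0 → tle v u := by
    have hfin : {u | coeffM a u ≠ 0}.Finite := by
      refine (Set.finite_iUnion fun i =>
        ((a i).support.finite_toSet.prod (Set.finite_singleton i))).subset fun u hu => ?_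
      exact Set.mem_iUnion.2 ⟨u.2, MvPolynomial.mem_support_iff.2 hu, rfl⟩
    obtain ⟨i, hi⟩ := Function.ne_iff.1 ha
    obtain ⟨t, ht⟩ := MvPolynomial.ne_zero_iff.1 hi
    exact exists_greatest_of_finite hord.tle_trans hord.tle_total hfin ⟨(t, i), ht⟩
  rw [sig, dif_pos h]
  exact h.choose_spec

theorem IsLeadingTerm.ne_zero {m : ℕ} {tle : Term n m → Term n m → Prop}
    {a : Fin m → MvPolynomial (Fin n) K} {u : Term n m}
    (h : IsLeadingTerm tle a u) : a ≠ 0 := by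
  rintro rfl
  exact h.1 (MvPolynomial.coeff_zero _)

theorem IsLeadingTerm.sig_eq (hord : OrdersOK ple tle) {a : Fin m → MvPolynomial (Fin n) K}
    {u : Term n m} (h : IsLeadingTerm tle a u) : sig tle a = u :=
  have hs := hord.isLeadingTerm_sig h.ne_zero
  hord.tle_antisymm _ _ (h.2 _ hs.1) (hs.2 _ h.1)

theorem IsLeadingTerm.monomMul {m : ℕ} {tle : Term n m → Term n m → Prop}
    (hord : OrdersOK ple tle) {a : Fin m → MvPolynomial (Fin n) K}
    {u : Term n m} (h : IsLeadingTerm tle a u) {c : K} (hc : c ≠ 0) (t : PP n) :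
    IsLeadingTerm tle (monomMul c t a) (mulTerm t u) := by
  refine ⟨?_, fun v hv => ?_⟩
  · simpa [coeffM, SigGB.monomMul, mulTerm, MvPolynomial.coeff_monomial_mul, hc] using h.1
  · rw [coeffM, SigGB.monomMul, MvPolynomial.coeff_monomial_mul'] at hv
    split_ifs at hv with htv
    · have hv' : v = mulTerm t (v.1 - t, v.2) := Prod.ext (add_tsub_cancel_of_le htv).symm rfl
      rw [hv']
      exact hord.tle_mul _ _ _ (h.2 _ (right_ne_zero_of_mul hv))
    · exact absurd rfl hv

theorem IsLeadingTerm.neg {m : ℕ} {tle : Term n m → Term n m → Prop}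
    {a : Fin m → MvPolynomial (Fin n) K} {u : Term n m}
    (h : IsLeadingTerm tle a u) : IsLeadingTerm tle (-a) u := by
  simpa [IsLeadingTerm, coeffM] using h

theorem IsLeadingTerm.sub_of_strict {m : ℕ} {tle : Term n m → Term n m → Prop}
    (hord : OrdersOK ple tle)
    {a b : Fin m → MvPolynomial (Fin n) K} {u v : Term n m} (ha : IsLeadingTerm tle a u)
    (hb : IsLeadingTerm tle b v) (hvu : strict tle v u) : IsLeadingTerm tle (a - b) u := by
  have hsub (w : Term n m) : coeffM (a - b) w = coeffM a w - coeffM b w :=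
    MvPolynomial.coeff_sub _ _ _ _
  have hbu : coeffM b u = 0 := by
    by_contra hne
    exact hvu.2 (hord.tle_antisymm _ _ hvu.1 (hb.2 u hne))
  refine ⟨by rw [hsub, hbu, sub_zero]; exact ha.1, fun w hw => ?_⟩
  by_cases haw : coeffM a w = 0
  · refine hord.tle_trans _ _ _ (hb.2 w fun hbw => hw ?_) hvu.1
    rw [hsub, haw, hbw, sub_zero]
  · exact ha.2 w haw

theorem ne_zero_of_bar_ne_zero {m : ℕ} {f : Fin m → MvPolynomial (Fin n) K}
    {a : Fin m → MvPolynomial (Fin n) K} (h : bar f a ≠ 0) :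
    a ≠ 0 := by
  rintro rfl
  exact h (by simp [bar])

variable (f ple tle)

/-- a regular S-pair is nonzero and its signature is the `tle`-maximum of
`(t/lp(‾a)) ⊗ 𝔰(a)` and `(t/lp(‾b)) ⊗ 𝔰(b)`, where `t = lcm(lp(‾a), lp(‾b))`. -/
theorem sig_of_regular_spair (hord : OrdersOK ple tle)
    (a b : Fin m → MvPolynomial (Fin n) K)
    (h : IsRegularSPair f ple tle a b)
    (t : PP n) (ht : t = lcmPP (lp ple (bar f a)) (lp ple (bar f b))) :
    spair f ple a b ≠ 0 ∧
      (sig tle (spair f ple a b) = mulTerm (t - lp ple (bar f a)) (sig tle a) ∨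
        sig tle (spair f ple a b) = mulTerm (t - lp ple (bar f b)) (sig tle b)) ∧
      tle (mulTerm (t - lp ple (bar f a)) (sig tle a)) (sig tle (spair f ple a b)) ∧
      tle (mulTerm (t - lp ple (bar f b)) (sig tle b)) (sig tle (spair f ple a b)) := by
  subst ht
  obtain ⟨ha, hb, hne⟩ := h
  have hA := (hord.isLeadingTerm_sig (ne_zero_of_bar_ne_zero ha)).monomMul hord
    (one_div_ne_zero (hord.lc_ne_zero ha))
    (lcmPP (lp ple (bar f a)) (lp ple (bar f b)) - lp ple (bar f a))
  have hB := (hord.isLeadingTerm_sig (ne_zero_of_bar_ne_zero hb)).monomMul hord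
    (one_div_ne_zero (hord.lc_ne_zero hb))
    (lcmPP (lp ple (bar f a)) (lp ple (bar f b)) - lp ple (bar f b))
  rcases hord.tle_total (mulTerm _ (sig tle a)) (mulTerm _ (sig tle b)) with hle | hle
  · have hS := (hB.sub_of_strict hord hA ⟨hle, hne⟩).neg
    rw [neg_sub, ← spair] at hS
    rw [hS.sig_eq hord]
    exact ⟨hS.ne_zero, Or.inr rfl, hle, hord.tle_refl _⟩
  · have hS : IsLeadingTerm tle (spair f ple a b) _ := hA.sub_of_strict hord hB ⟨hle, hne.symm⟩
    rw [hS.sig_eq hord]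
    exact ⟨hS.ne_zero, Or.inl rfl, hord.tle_refl _, hle⟩

end

end SigGB
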